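/- arXiv:1511.08961 — 2 statements merged into one kernel-verified Lean document; each statement's English description precedes it below -/
import Mathlib

section
/- Let N ≥ 1 and let P be a real 2N×2N matrix (indexed by Fin N ⊕ Fin N) that is symmetric positive definite and belongs to the symplectic group Sp(2N,ℝ), i.e. P * J * Pᵀ = J. Then the unique symmetric positive-definite square root Q of P (the matrix Q with Qᵀ = Q, Q positive definite and Q * Q = P) also belongs to Sp(2N,ℝ). -/
open Matrix

/-!
A matrix `A` preserves the bilinear form with unitary Gram matrix `U`, in the sense that
`A * U * Aᵀ = U`, exactly when `U * Aᵀ * Uᴴ` is a right inverse of `A`. If `A` is positive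
semidefinite, so is this candidate inverse, and its square is the candidate inverse of `A * A`.
Hence, if `A * A` preserves the form, `A⁻¹` and `U * Aᵀ * Uᴴ` are two positive semidefinite square
roots of `(A * A)⁻¹`, so they are equal. The symplectic group is the case `U = J`.
-/

theorem mul_mul_eq_iff_mul_conj_eq_one {M : Type*} [Monoid M] [StarMul M] {u : M}
    (hu : u ∈ unitary M) (a b : M) : a * u * b = u ↔ a * (u * b * star u) = 1 := by
  constructor <;> intro h
  · calc a * (u * b * star u) = a * u * b * star u := by simp only [mul_assoc]
      _ = 1 := by rw [h, Unitary.mul_star_self_of_mem hu]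
  · calc a * u * b = a * (u * b * star u) * u := by
          simp only [mul_assoc, Unitary.star_mul_self_of_mem hu, mul_one]
      _ = u := by rw [h, one_mul]

theorem J_mem_unitaryGroup (l R : Type*) [Fintype l] [DecidableEq l] [CommRing R] [StarRing R] :
    J l R ∈ unitaryGroup (l ⊕ l) R := by
  have star_J : star (J l R) = -J l R := by
    simp [star_eq_conjTranspose, J, fromBlocks_conjTranspose, fromBlocks_neg]
  rw [mem_unitaryGroup_iff, star_J, mul_neg, J_squared, neg_neg]

section RCLike

open scoped ComplexOrder

variable {n 𝕜 : Type*} [Fintype n] [DecidableEq n] [RCLike 𝕜]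

open scoped MatrixOrder Matrix.Norms.L2Operator in
theorem mul_eq_one_of_posSemidef_of_mul_self_mul_mul_self_eq_one {A B : Matrix n n 𝕜}
    (hA : A.PosSemidef) (hB : B.PosSemidef) (h : A * A * (B * B) = 1) : A * B = 1 := by
  have inv_mul_inv : A⁻¹ * A⁻¹ = B * B := by rw [← Matrix.mul_inv_rev, inv_eq_right_inv h]
  have inv_eq : A⁻¹ = B :=
    (CFC.mul_self_eq_mul_self_iff _ _ hA.inv.nonneg hB.nonneg).mp inv_mul_inv
  have det_isUnit : IsUnit A.det :=
    (isUnit_iff_isUnit_det A).mp (.of_mul_eq_one (A * (B * B)) (by rw [← mul_assoc, h]))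
  rw [← inv_eq, mul_nonsing_inv A det_isUnit]

theorem mul_unitary_mul_transpose_eq_of_mul_self {A U : Matrix n n 𝕜} (hA : A.PosSemidef)
    (hU : U ∈ unitaryGroup n 𝕜) (h : A * A * U * (A * A)ᵀ = U) : A * U * Aᵀ = U := by
  have conj_posSemidef : (U * Aᵀ * star U).PosSemidef :=
    hA.transpose.mul_mul_conjTranspose_same U
  have conj_mul_self : U * (Aᵀ * Aᵀ) * star U = U * Aᵀ * star U * (U * Aᵀ * star U) :=
    map_mul (Unitary.conjStarAlgAut 𝕜 (Matrix n n 𝕜) ⟨U, hU⟩) Aᵀ Aᵀ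
  rw [mul_mul_eq_iff_mul_conj_eq_one hU, transpose_mul, conj_mul_self] at h
  rw [mul_mul_eq_iff_mul_conj_eq_one hU]
  exact mul_eq_one_of_posSemidef_of_mul_self_mul_mul_self_eq_one hA conj_posSemidef h

theorem posDef_sqrt_mem_symplecticGroup_general {l : Type*} [Fintype l] [DecidableEq l]
    {Q : Matrix (l ⊕ l) (l ⊕ l) 𝕜} (hQ : Q.PosSemidef) (hQQ : Q * Q ∈ symplecticGroup l 𝕜) :
    Q ∈ symplecticGroup l 𝕜 := by
  rw [SymplecticGroup.mem_iff] at hQQ ⊢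
  exact mul_unitary_mul_transpose_eq_of_mul_self hQ (J_mem_unitaryGroup l 𝕜) hQQ

end RCLike

/-- The unique symmetric positive-definite square root of a symmetric positive-definite
symplectic matrix is itself symplectic. -/
theorem posDef_sqrt_mem_symplecticGroup
    (N : ℕ) (hN : 1 ≤ N)
    (P Q : Matrix (Fin N ⊕ Fin N) (Fin N ⊕ Fin N) ℝ)
    (hP : P.PosDef) (hPsp : P ∈ Matrix.symplecticGroup (Fin N) ℝ)
    (hQsymm : Qᵀ = Q) (hQ : Q.PosDef) (hQQ : Q * Q = P) :
    Q ∈ Matrix.symplecticGroup (Fin N) ℝ :=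
  posDef_sqrt_mem_symplecticGroup_general hQ.posSemidef (hQQ ▸ hPsp)
end

section
/- Let 𝓕 be a co-filter on a set S and 𝓖 a co-filter on a set T. Then hom(𝓕,𝓖) is a co-filter on S × T; that is: (i) if U ∈ hom(𝓕,𝓖) and V ⊆ U, then V ∈ hom(𝓕,𝓖); (ii) if U, V ∈ hom(𝓕,𝓖), then U ∪ V ∈ hom(𝓕,𝓖). -/
/-- A co-filter on a set `S`: a collection of subsets closed under passing to subsets
and under binary unions. -/
def IsCofilter {S : Type*} (F : Set (Set S)) : Prop :=
  (∀ A ∈ F, ∀ B : Set S, B ⊆ A → B ∈ F) ∧ ∀ A ∈ F, ∀ B ∈ F, A ∪ B ∈ F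

/-- The co-filter `hom(𝓕, 𝓖)` on `S × T`: subsets `U` such that `U ∩ (R × {t})` is finite
for all `t ∈ T`, `R ∈ 𝓕`, and such that `H_R(U) = {t | U ∩ (R × {t}) ≠ ∅} ∈ 𝓖` for `R ∈ 𝓕`. -/
def cofilterHom {S T : Type*} (F : Set (Set S)) (G : Set (Set T)) :
    Set (Set (S × T)) :=
  {U | (∀ t : T, ∀ R ∈ F, (U ∩ R ×ˢ ({t} : Set T)).Finite) ∧
       ∀ R ∈ F, {t : T | (U ∩ R ×ˢ ({t} : Set T)).Nonempty} ∈ G}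

theorem isCofilter_iff {S : Type*} {F : Set (Set S)} :
    IsCofilter F ↔ IsLowerSet F ∧ SupClosed F :=
  ⟨fun h => ⟨fun A B hBA hA => h.1 A hA B hBA, fun A hA B hB => h.2 A hA B hB⟩,
    fun h => ⟨fun _ hA _ hBA => h.1 hBA hA, fun _ hA _ hB => h.2 hA hB⟩⟩

section Hom

variable {S T : Type*}

/-- The set `H_R(U)` of those `t : T` whose fibre in `U` meets `R`, through which `cofilterHom`
imposes its condition on `G`. It is written with `U ∩ R ×ˢ {t}` so as to agree definitionally with
the set in `cofilterHom`. -/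
def hitSet (R : Set S) (U : Set (S × T)) : Set T :=
  {t | (U ∩ R ×ˢ ({t} : Set T)).Nonempty}

theorem hitSet_mono (R : Set S) : Monotone (hitSet R : Set (S × T) → Set T) :=
  fun _ _ hVU _ ht => ht.mono (Set.inter_subset_inter_left _ hVU)

theorem hitSet_union (R : Set S) (U V : Set (S × T)) :
    hitSet R (U ∪ V) = hitSet R U ∪ hitSet R V := by
  ext t
  simp only [hitSet, Set.union_inter_distrib_right, Set.union_nonempty, Set.mem_union,
    Set.mem_ofPred_eq]

variable {F : Set (Set S)} {G : Set (Set T)}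

theorem mem_cofilterHom_iff {U : Set (S × T)} :
    U ∈ cofilterHom F G ↔
      (∀ t : T, ∀ R ∈ F, (U ∩ R ×ˢ ({t} : Set T)).Finite) ∧ ∀ R ∈ F, hitSet R U ∈ G :=
  Iff.rfl

theorem isLowerSet_cofilterHom (hG : IsLowerSet G) : IsLowerSet (cofilterHom F G) := by
  intro U V hVU hU
  obtain ⟨hfin, hhit⟩ := mem_cofilterHom_iff.1 hU
  refine mem_cofilterHom_iff.2 ⟨fun t R hR => ?_, fun R hR => ?_⟩
  · exact (hfin t R hR).subset (Set.inter_subset_inter_left _ hVU)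
  · exact hG (hitSet_mono R hVU) (hhit R hR)

theorem supClosed_cofilterHom (hG : SupClosed G) : SupClosed (cofilterHom F G) := by
  intro U hU V hV
  change U ∪ V ∈ cofilterHom F G
  obtain ⟨hUfin, hUhit⟩ := mem_cofilterHom_iff.1 hU
  obtain ⟨hVfin, hVhit⟩ := mem_cofilterHom_iff.1 hV
  refine mem_cofilterHom_iff.2 ⟨fun t R hR => ?_, fun R hR => ?_⟩
  · rw [Set.union_inter_distrib_right]
    exact (hUfin t R hR).union (hVfin t R hR)
  · rw [hitSet_union]
    exact hG (hUhit R hR) (hVhit R hR)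

end Hom

theorem cofilterHom_isCofilter_general {S T : Type*} (F : Set (Set S)) {G : Set (Set T)}
    (hG : IsCofilter G) : IsCofilter (cofilterHom F G) := by
  obtain ⟨hLower, hSup⟩ := isCofilter_iff.1 hG
  exact isCofilter_iff.2 ⟨isLowerSet_cofilterHom hLower, supClosed_cofilterHom hSup⟩

/-- If `𝓕` and `𝓖` are co-filters, then so is `hom(𝓕, 𝓖)`. -/
theorem cofilterHom_isCofilter {S T : Type*} (F : Set (Set S)) (G : Set (Set T))
    (hF : IsCofilter F) (hG : IsCofilter G) :
    IsCofilter (cofilterHom F G) :=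
  cofilterHom_isCofilter_general F hG
end
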